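/- (a) A set of unordered unranked Σ-trees is MSO-definable if and only if it is of the form L_u(A_c) for a counting nondeterministic unranked tree automaton A_c. (b) A unary query over unordered unranked Σ-trees is MSO-definable if and only if it is definable by a counting query automaton under the existential semantics, if and only if it is definable by a counting query automaton under the universal semantics. -/

import Mathlib

/-!
Both directions go through runs seen as labelings of the nodes.

*Formulas to automata.* A property of labelled trees is called recognizable (`Rec`) if it is decided
by evaluating the tree bottom-up in a finite commutative monoid `M`, the value of a node being
`step label (sum of the values of the children)`, where `M` is aperiodic:
`(K + 1) • m = K • m` for some `K`. Recognizable properties are closed under complement, under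
intersection (product of monoids), and under projection of the alphabet (`Rec.proj`): the power set
of `M` with elementwise addition computes all reachable values, and it is again aperiodic since in a
long sum some summand is repeated often enough to absorb or release one copy
(`nsmul_set_stable`). The atomic formulas are instances of the property that some `X`-node is above
some `Y`-node (`rec_above`), and first-order quantification is set quantification restricted to
singletons (`rec_unique`). Hence every MSO formula is recognizable over trees whose labels carry the valuation
(`rec_of_mso`). By aperiodicity a sum over the children depends only on the multiplicities of the
values up to `K`, so a counting automaton can guess the evaluation together with a marking of
the nodes and verify it locally (`exists_automaton`). The marking of exactly one node provides the
existential semantics, and applied to the negated formula the universal one.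

*Automata to formulas.* A run is a family of set variables, one for each state; having at least `k`
children in `X` is first-order expressible because the child relation is the covering relation of
the descendant order (`mso_of_automaton`).
-/

namespace UnrankedTrees

/-! ### Unranked trees: tree domains and ordered unranked Σ-trees.
Nodes are finite strings over ℕ; a tree domain is a finite prefix-closed set
of nodes such that `s ++ [i] ∈ D` implies `s ++ [j] ∈ D` for all `j < i`. -/

abbrev Node : Type := List ℕ

/-- An ordered unranked tree over alphabet `A`: a tree domain with a labeling. -/
structure UTree (A : Type) where
  dom : Finset Node
  nil_mem : ([] : Node) ∈ dom
  prefix_closed : ∀ ⦃s t : Node⦄, s ∈ dom → t <+: s → t ∈ dom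
  sib_closed : ∀ ⦃s : Node⦄ ⦃i j : ℕ⦄, s ++ [i] ∈ dom → j < i → s ++ [j] ∈ dom
  label : Node → A

namespace UTree

variable {A : Type}

/-- The child relation `≺_ch`. -/
def childR (T : UTree A) (s t : Node) : Prop :=
  s ∈ T.dom ∧ t ∈ T.dom ∧ ∃ i : ℕ, t = s ++ [i]

/-- The descendant-or-self relation `≺*_ch` (the prefix relation). -/
def descR (T : UTree A) (s t : Node) : Prop :=
  s ∈ T.dom ∧ t ∈ T.dom ∧ s <+: t

/-- The next-sibling relation `≺_ns`. -/
def nsR (T : UTree A) (s t : Node) : Prop :=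
  s ∈ T.dom ∧ t ∈ T.dom ∧ ∃ (u : Node) (i : ℕ), s = u ++ [i] ∧ t = u ++ [i + 1]

/-- The sibling ordering `≺*_ns` (reflexive-transitive closure of next-sibling). -/
def sibR (T : UTree A) (s t : Node) : Prop :=
  s ∈ T.dom ∧ t ∈ T.dom ∧ ∃ (u : Node) (i j : ℕ), s = u ++ [i] ∧ t = u ++ [j] ∧ i ≤ j

/-- The first-child relation `≺_fc`. -/
def firstChildR (T : UTree A) (s t : Node) : Prop :=
  s ∈ T.dom ∧ t ∈ T.dom ∧ t = s ++ [0]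

/-- The number of children of a node. -/
noncomputable def childCount (T : UTree A) (s : Node) : ℕ :=
  Set.ncard {i : ℕ | s ++ [i] ∈ T.dom}

/-- The list of children of a node `s`, in sibling order: `s·0, …, s·(n-1)`. -/
noncomputable def childrenList (T : UTree A) (s : Node) : List Node :=
  (List.range (T.childCount s)).map fun i => s ++ [i]

/-- `s` is a leaf of `T`. -/
def isLeaf (T : UTree A) (s : Node) : Prop :=
  s ∈ T.dom ∧ ∀ i : ℕ, s ++ [i] ∉ T.dom

/-- `s` has no next sibling in `T` (the root also counts as "last"). -/
def isLast (T : UTree A) (s : Node) : Prop :=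
  s = [] ∨ ∃ (u : Node) (i : ℕ), s = u ++ [i] ∧ u ++ [i + 1] ∉ T.dom

end UTree

/-! ### MSO over *unordered* unranked trees (no sibling order in the
vocabulary: atoms are x = y, x ≺*_ch y, P_a(x), X(x)). -/

inductive MSOu (A : Type) : Type where
  | eq : ℕ → ℕ → MSOu A
  | desc : ℕ → ℕ → MSOu A
  | lab : A → ℕ → MSOu A
  | mem : ℕ → ℕ → MSOu A
  | not : MSOu A → MSOu A
  | and : MSOu A → MSOu A → MSOu A
  | exFO : ℕ → MSOu A → MSOu A
  | exSO : ℕ → MSOu A → MSOu A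

namespace MSOu

variable {A : Type}

def Sat (T : UTree A) (v : ℕ → Node) (V : ℕ → Set Node) : MSOu A → Prop
  | .eq x y => v x = v y
  | .desc x y => T.descR (v x) (v y)
  | .lab a x => v x ∈ T.dom ∧ T.label (v x) = a
  | .mem X x => v x ∈ V X
  | .not φ => ¬ Sat T v V φ
  | .and φ ψ => Sat T v V φ ∧ Sat T v V ψ
  | .exFO n φ => ∃ s ∈ T.dom, Sat T (Function.update v n s) V φ
  | .exSO n φ => ∃ S : Set Node, S ⊆ ↑T.dom ∧ Sat T v (Function.update V n S) φ

def DefinesB (φ : MSOu A) (L : Set (UTree A)) : Prop :=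
  ∀ (T : UTree A) (v : ℕ → Node) (V : ℕ → Set Node), T ∈ L ↔ Sat T v V φ

def DefinesU (φ : MSOu A) (Q : UTree A → Set Node) : Prop :=
  ∀ (T : UTree A) (v : ℕ → Node) (V : ℕ → Set Node) (s : Node), s ∈ T.dom →
    (s ∈ Q T ↔ Sat T (Function.update v 0 s) V φ)

end MSOu

/-! ### Counting unranked tree automata (for unordered trees). -/

/-- Boolean formulas over a set `V` of variables. -/
inductive BForm (V : Type) : Type where
  | tru : BForm V
  | var : V → BForm V
  | not : BForm V → BForm V
  | and : BForm V → BForm V → BForm V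

def BForm.Eval {V : Type} (f : V → Prop) : BForm V → Prop
  | .tru => True
  | .var v => f v
  | .not φ => ¬ BForm.Eval f φ
  | .and φ ψ => BForm.Eval f φ ∧ BForm.Eval f ψ

/-- A counting nondeterministic unranked tree automaton: `δ(q,a)` is a Boolean
function over the variables `v_q^k` (`q ∈ Q`, `k > 0`); the pair `(q, k) : Q × ℕ`
stands for the variable `v_q^{k+1}`, i.e. "at least `k+1` children in state `q`". -/
structure CNUTA (A : Type) where
  Q : Type
  fintype_Q : Fintype Q
  F : Set Q
  δ : Q → A → BForm (Q × ℕ)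

namespace CNUTA

variable {A : Type}

/-- A run: at each node labelled `a` in state `q`, the Boolean function
`δ(q,a)` evaluates to true, where `v_{q'}^k` is true iff the node has at least
`k` children in state `q'`. -/
def IsRun (N : CNUTA A) (T : UTree A) (ρ : Node → N.Q) : Prop :=
  ∀ s ∈ T.dom, (N.δ (ρ s) (T.label s)).Eval fun qk =>
    qk.2 + 1 ≤ Set.ncard {i : ℕ | s ++ [i] ∈ T.dom ∧ ρ (s ++ [i]) = qk.1}

def Accepts (N : CNUTA A) (T : UTree A) : Prop :=
  ∃ ρ : Node → N.Q, N.IsRun T ρ ∧ ρ [] ∈ N.F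

end CNUTA

/-- A counting query automaton: a counting NUTA with a selection set. -/
structure CQA (A : Type) where
  N : CNUTA A
  S : Set (N.Q × A)

namespace CQA

variable {A : Type}

def existsSem (QA : CQA A) (T : UTree A) : Set Node :=
  {s | s ∈ T.dom ∧ ∃ ρ : Node → QA.N.Q, QA.N.IsRun T ρ ∧ ρ [] ∈ QA.N.F ∧
    (ρ s, T.label s) ∈ QA.S}

def forallSem (QA : CQA A) (T : UTree A) : Set Node :=
  {s | s ∈ T.dom ∧ ∀ ρ : Node → QA.N.Q, QA.N.IsRun T ρ → ρ [] ∈ QA.N.F →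
    (ρ s, T.label s) ∈ QA.S}

end CQA

section Proof

open scoped Pointwise

variable {A B C : Type}

/-! ### Bottom-up evaluation in commutative monoids -/

/-- The finite set of indices `i` such that `s ++ [i]` is a child of `s`. -/
noncomputable def ch (T : UTree A) (s : Node) : Finset ℕ :=
  T.dom.preimage (fun i => s ++ [i]) (fun _ _ _ _ h => by simpa using h)

@[simp] lemma mem_ch {T : UTree A} {s : Node} {i : ℕ} : i ∈ ch T s ↔ s ++ [i] ∈ T.dom :=
  Finset.mem_preimage

lemma UTree.parent_mem (T : UTree A) {s : Node} {i : ℕ} (h : s ++ [i] ∈ T.dom) : s ∈ T.dom :=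
  T.prefix_closed h (List.prefix_append _ _)

/-- Bottom-up induction along a tree domain. -/
lemma UTree.bottomUp (T : UTree A) {P : Node → Prop}
    (h : ∀ s ∈ T.dom, (∀ i, s ++ [i] ∈ T.dom → P (s ++ [i])) → P s) :
    ∀ s ∈ T.dom, P s := by
  have key : ∀ n : ℕ, ∀ s ∈ T.dom, T.dom.sup List.length < n + s.length → P s := by
    intro n
    induction n with
    | zero =>
      intro s hs hlt
      have := Finset.le_sup (f := List.length) hs
      omega
    | succ n ih =>
      intro s hs hlt
      refine h s hs fun i hi => ih _ hi ?_
      simp only [List.length_append, List.length_singleton]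
      omega
  intro s hs
  exact key (T.dom.sup List.length + 1) s hs (by omega)

/-- `ρ` is the bottom-up evaluation of the tree `T`, relabelled by `ℓ`: the value of a node is
obtained from its label and the sum of the values of its children. -/
def IsEval {M : Type} [AddCommMonoid M] (T : UTree A) (step : B → M → M) (ℓ : Node → B)
    (ρ : Node → M) : Prop :=
  ∀ s ∈ T.dom, ρ s = step (ℓ s) (∑ i ∈ ch T s, ρ (s ++ [i]))

lemma exists_isEval {M : Type} [AddCommMonoid M] (T : UTree A) (step : B → M → M)
    (ℓ : Node → B) : ∃ ρ, IsEval T step ℓ ρ := by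
  -- `ev n s` evaluates the part of the subtree at `s` of depth less than `n`.
  let ev : ℕ → Node → M := fun n => Nat.rec (fun _ => 0)
    (fun _ f s => step (ℓ s) (∑ i ∈ ch T s, f (s ++ [i]))) n
  refine ⟨fun s => ev (T.dom.sup List.length + 1 - s.length) s, fun s hs => ?_⟩
  have := Finset.le_sup (f := List.length) hs
  have h1 : T.dom.sup List.length + 1 - s.length
      = (T.dom.sup List.length - s.length) + 1 := by omega
  have h2 : ∀ i, T.dom.sup List.length + 1 - (s ++ [i]).length
      = T.dom.sup List.length - s.length := by intro i; simp
  simp only [h1, h2]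
  rfl

lemma IsEval.congr {M : Type} [AddCommMonoid M] {T : UTree A} {step : B → M → M}
    {ℓ ℓ' : Node → B} {ρ : Node → M} (h : IsEval T step ℓ ρ) (hl : ∀ s ∈ T.dom, ℓ s = ℓ' s) :
    IsEval T step ℓ' ρ := fun s hs => by rw [← hl s hs]; exact h s hs

/-- A property of relabelled trees is recognizable if it is decided by the value of the root under
bottom-up evaluation in a finite commutative monoid which is aperiodic, i.e. `(K + 1) • m = K • m`
for a fixed `K`. Aperiodicity makes a sum depend only on multiplicities up to the threshold `K`.
The alphabet `B` may be infinite. -/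
def Rec (R : UTree A → (Node → B) → Prop) : Prop :=
  ∃ (M : Type) (_ : AddCommMonoid M) (_ : Finite M) (K : ℕ) (_ : ∀ m : M, (K + 1) • m = K • m)
    (step : B → M → M) (F : Set M),
    ∀ T ℓ ρ, IsEval T step ℓ ρ → (R T ℓ ↔ ρ [] ∈ F)

/-! ### Closure properties of recognizable sets -/

lemma Rec.congr {R : UTree A → (Node → B) → Prop} (h : Rec R) {T : UTree A} {ℓ ℓ' : Node → B}
    (hl : ∀ s ∈ T.dom, ℓ s = ℓ' s) : R T ℓ ↔ R T ℓ' := by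
  obtain ⟨M, _, _, K, hK, step, F, H⟩ := h
  obtain ⟨ρ, hρ⟩ := exists_isEval T step ℓ
  rw [H T ℓ ρ hρ, H T ℓ' ρ (hρ.congr hl)]

lemma Rec.not {R : UTree A → (Node → B) → Prop} (h : Rec R) : Rec fun T ℓ => ¬ R T ℓ := by
  obtain ⟨M, _, _, K, hK, step, F, H⟩ := h
  exact ⟨M, _, inferInstance, K, hK, step, Fᶜ, fun T ℓ ρ hρ => not_congr (H T ℓ ρ hρ)⟩

lemma nsmul_stable {M : Type} [AddCommMonoid M] {K : ℕ} (hK : ∀ m : M, (K + 1) • m = K • m)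
    (m : M) {n : ℕ} (hn : K ≤ n) : n • m = K • m := by
  induction n, hn using Nat.le_induction with
  | base => rfl
  | succ n _ ih => rw [succ_nsmul, ih, ← succ_nsmul, hK]

lemma Rec.and {R S : UTree A → (Node → B) → Prop} (h : Rec R) (h' : Rec S) :
    Rec fun T ℓ => R T ℓ ∧ S T ℓ := by
  obtain ⟨M, _, _, K, hK, step, F, H⟩ := h
  obtain ⟨M', _, _, K', hK', step', F', H'⟩ := h'
  refine ⟨M × M', inferInstance, inferInstance, K + K', ?_,
    fun b m => (step b m.1, step' b m.2), {m | m.1 ∈ F ∧ m.2 ∈ F'}, ?_⟩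
  · rintro ⟨m, m'⟩
    ext
    · simp only [Prod.smul_fst]
      rw [nsmul_stable hK m (by omega), nsmul_stable hK m (n := K + K') (by omega)]
    · simp only [Prod.smul_snd]
      rw [nsmul_stable hK' m' (by omega), nsmul_stable hK' m' (n := K + K') (by omega)]
  · intro T ℓ ρ hρ
    have h1 : IsEval T step ℓ (fun s => (ρ s).1) := fun s hs => by
      have := congrArg Prod.fst (hρ s hs)
      simpa [Prod.fst_sum] using this
    have h2 : IsEval T step' ℓ (fun s => (ρ s).2) := fun s hs => by
      have := congrArg Prod.snd (hρ s hs)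
      simpa [Prod.snd_sum] using this
    exact and_congr (H _ _ _ h1) (H' _ _ _ h2)

lemma Rec.comap {R : UTree A → (Node → C) → Prop} (h : Rec R) (f : B → C) :
    Rec fun (T : UTree A) (ℓ : Node → B) => R T (fun s => f (ℓ s)) := by
  obtain ⟨M, _, _, K, hK, step, F, H⟩ := h
  exact ⟨M, _, inferInstance, K, hK, fun b => step (f b), F, fun T ℓ ρ hρ => H T _ ρ hρ⟩

lemma mem_nsmul_set {M : Type} [AddCommMonoid M] (S : Set M) (n : ℕ) (x : M) :
    x ∈ n • S ↔ ∃ s : Multiset M, s.card = n ∧ (∀ m ∈ s, m ∈ S) ∧ s.sum = x := by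
  induction n generalizing x with
  | zero =>
    simp only [zero_nsmul, Set.mem_zero, Multiset.card_eq_zero]
    constructor
    · rintro rfl; exact ⟨0, by simp⟩
    · rintro ⟨s, rfl, -, h⟩; simpa using h.symm
  | succ n ih =>
    rw [succ_nsmul, Set.mem_add]
    constructor
    · rintro ⟨y, hy, z, hz, rfl⟩
      obtain ⟨s, hs, hS, rfl⟩ := (ih y).1 hy
      refine ⟨z ::ₘ s, by simp [hs], ?_, by simp [add_comm]⟩
      intro m hm
      rcases Multiset.mem_cons.1 hm with rfl | hm
      exacts [hz, hS m hm]
    · rintro ⟨s, hs, hS, rfl⟩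
      obtain ⟨z, hz⟩ := Multiset.card_pos_iff_exists_mem.1 (by omega : 0 < s.card)
      obtain ⟨t, rfl⟩ := Multiset.exists_cons_of_mem hz
      refine ⟨t.sum, (ih _).2 ⟨t, by simpa using hs, fun m hm => hS m (by simp [hm]), rfl⟩,
        z, hS z (by simp), by simp [add_comm]⟩

/-- In a large multiset over a finite type some element is repeated more than `K` times. -/
lemma exists_replicate_add {M : Type} [Finite M] (K : ℕ) (s : Multiset M)
    (hs : Nat.card M * K < s.card) : ∃ m t, s = Multiset.replicate (K + 1) m + t := by
  classical
  have := Fintype.ofFinite M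
  by_contra! hcon
  have hc : ∀ m, s.count m ≤ K := by
    intro m
    by_contra! hlt
    obtain ⟨t, ht⟩ := Multiset.le_iff_exists_add.1 (Multiset.le_count_iff_replicate_le.1 hlt)
    exact hcon m t ht
  have h1 : s.card = ∑ m : M, s.count m :=
    (Multiset.sum_count_eq_card fun a _ => Finset.mem_univ a).symm
  have h2 : ∑ m : M, s.count m ≤ ∑ _m : M, K := Finset.sum_le_sum fun m _ => hc m
  rw [Finset.sum_const, smul_eq_mul, Finset.card_univ, ← Nat.card_eq_fintype_card] at h2
  omega

/-- The power set of a finite aperiodic commutative monoid is aperiodic: in a long sum of elements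
of `S` some summand occurs often enough that one copy of it can be added or removed. -/
lemma nsmul_set_stable {M : Type} [AddCommMonoid M] [Finite M] {K : ℕ}
    (hK : ∀ m : M, (K + 1) • m = K • m) (S : Set M) :
    (Nat.card M * (K + 1) + 1 + 1) • S = (Nat.card M * (K + 1) + 1) • S := by
  have hK2 : ∀ m : M, (K + 1 + 1) • m = (K + 1) • m := fun m => by
    rw [nsmul_stable hK m (by omega), hK]
  have hK3 : ∀ m : M, (K + 1 + 1 + 1) • m = (K + 1 + 1) • m := fun m => by
    rw [nsmul_stable hK m (by omega), nsmul_stable hK m (n := K + 1 + 1) (by omega)]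
  ext x
  rw [mem_nsmul_set, mem_nsmul_set]
  constructor
  · rintro ⟨s, hs, hS, rfl⟩
    obtain ⟨m, t, rfl⟩ := exists_replicate_add (K + 1) s (by omega)
    refine ⟨Multiset.replicate (K + 1) m + t, ?_, ?_, ?_⟩
    · simp at hs ⊢; omega
    · intro y hy
      apply hS
      simp only [Multiset.mem_add, Multiset.mem_replicate] at hy ⊢
      tauto
    · simp only [Multiset.sum_add, Multiset.sum_replicate, hK2]
  · rintro ⟨s, hs, hS, rfl⟩
    obtain ⟨m, t, rfl⟩ := exists_replicate_add (K + 1) s (by omega)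
    refine ⟨Multiset.replicate (K + 1 + 1 + 1) m + t, ?_, ?_, ?_⟩
    · simp at hs ⊢; omega
    · intro y hy
      apply hS
      simp only [Multiset.mem_add, Multiset.mem_replicate] at hy ⊢
      tauto
    · simp only [Multiset.sum_add, Multiset.sum_replicate, hK3]

/-- Closure under projection of the alphabet. The power-set monoid with elementwise addition
computes the set of values reachable over all choices of the forgotten labels. -/
lemma Rec.proj {R : UTree A → (Node → B × C) → Prop} (h : Rec R) :
    Rec fun T ℓ => ∃ c : Node → C, R T (fun s => (ℓ s, c s)) := by
  classical
  obtain ⟨M, _, _, K, hK, step, F, H⟩ := h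
  refine ⟨Set M, inferInstance, inferInstance, _, nsmul_set_stable hK,
    fun b S => {x | ∃ m ∈ S, ∃ c, step (b, c) m = x}, {S | ∃ m ∈ S, m ∈ F}, ?_⟩
  intro T ℓ ρ hρ
  constructor
  · rintro ⟨c, hc⟩
    obtain ⟨σ, hσ⟩ := exists_isEval T step (fun s => (ℓ s, c s))
    refine ⟨σ [], ?_, (H _ _ _ hσ).1 hc⟩
    refine T.bottomUp (P := fun s => σ s ∈ ρ s) ?_ [] T.nil_mem
    intro s hs ih
    rw [hρ s hs, hσ s hs]
    refine ⟨_, Set.finsetSum_mem_finsetSum _ _ _ fun i hi => ih i (mem_ch.1 hi), c s, rfl⟩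
  · rintro ⟨m₀, hm₀, hF⟩
    have hstep : ∀ (s : Node) (m : M), ∃ (g : ℕ → M) (c : C ⊕ Unit), s ∈ T.dom → m ∈ ρ s →
        (∀ i ∈ ch T s, g i ∈ ρ (s ++ [i])) ∧
        ∃ c', c = Sum.inl c' ∧ m = step (ℓ s, c') (∑ i ∈ ch T s, g i) := by
      intro s m
      by_cases hs : s ∈ T.dom ∧ m ∈ ρ s
      · obtain ⟨hs, hm⟩ := hs
        rw [hρ s hs] at hm
        obtain ⟨x, hx, c, rfl⟩ := hm
        rw [Set.mem_finsetSum] at hx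
        obtain ⟨g, hg, rfl⟩ := hx
        exact ⟨g, Sum.inl c, fun _ _ => ⟨fun i hi => hg hi, c, rfl, rfl⟩⟩
      · exact ⟨fun _ => m, Sum.inr (), fun h1 h2 => (hs ⟨h1, h2⟩).elim⟩
    choose g c hgc using hstep
    -- A run of the original algebra, built from the root downwards.
    let σ : Node → M := fun t =>
      (t.foldl (fun (p : Node × M) i => (p.1 ++ [i], g p.1 p.2 i)) ([], m₀)).2
    have hfst : ∀ t : Node,
        (t.foldl (fun (p : Node × M) i => (p.1 ++ [i], g p.1 p.2 i)) ([], m₀)).1 = t := by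
      intro t
      induction t using List.reverseRecOn with
      | nil => rfl
      | append_singleton t i ih => simp [List.foldl_append, ih]
    have hσ : ∀ s i, σ (s ++ [i]) = g s (σ s) i := by
      intro s i
      simp [σ, List.foldl_append, hfst]
    have hmem : ∀ s : Node, s ∈ T.dom → σ s ∈ ρ s := by
      intro s
      induction s using List.reverseRecOn with
      | nil => exact fun _ => hm₀
      | append_singleton s i ih =>
        intro hi
        have hs := T.parent_mem hi
        rw [hσ]
        exact (hgc s (σ s) hs (ih hs)).1 i (mem_ch.2 hi)
    obtain ⟨-, c₀, -⟩ := hgc [] (σ []) T.nil_mem (hmem _ T.nil_mem)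
    refine ⟨fun s => (c s (σ s)).elim id (fun _ => c₀), (H _ _ σ ?_).2 hF⟩
    intro s hs
    obtain ⟨-, c', hc', heq⟩ := hgc s (σ s) hs (hmem s hs)
    simp only [hc', hσ, Sum.elim_inl, id]
    exact heq

/-- The basic recognizable property: some node with label in `X` lies above some node with label
in `Y`. Both components of the monoid are truth values added by disjunction, with `⊤` as true. -/
lemma rec_above (X Y : B → Prop) :
    Rec fun (T : UTree A) ℓ => ∃ s ∈ T.dom, ∃ t ∈ T.dom, s <+: t ∧ X (ℓ s) ∧ Y (ℓ t) := by
  classical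
  refine ⟨WithTop Unit × WithTop Unit, inferInstance, inferInstance, 1, ?_,
    fun b m => (if Y b ∨ m.1 = ⊤ then ⊤ else 0,
      if (X b ∧ (Y b ∨ m.1 = ⊤)) ∨ m.2 = ⊤ then ⊤ else 0), {m | m.2 = ⊤}, ?_⟩
  · have : ∀ x : WithTop Unit, (1 + 1) • x = 1 • x := by
      intro x
      rw [succ_nsmul]
      cases x <;> simp
    rintro ⟨x, y⟩
    exact Prod.ext (this x) (this y)
  · intro T ℓ ρ hρ
    have hite : ∀ (p : Prop) [Decidable p], (if p then (⊤ : WithTop Unit) else 0) = ⊤ ↔ p := by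
      intro p _
      by_cases hp : p <;> simp [hp]
    have hpre : ∀ s t : Node, t ∈ T.dom →
        (s <+: t ↔ t = s ∨ ∃ i, s ++ [i] ∈ T.dom ∧ s ++ [i] <+: t) := by
      intro s t ht
      constructor
      · rintro ⟨u, rfl⟩
        cases u with
        | nil => simp
        | cons i u =>
          have : s ++ [i] <+: s ++ i :: u := ⟨u, by simp⟩
          exact Or.inr ⟨i, T.prefix_closed ht this, this⟩
      · rintro (rfl | ⟨i, -, h⟩)
        · exact List.prefix_rfl
        · exact (List.prefix_append _ _).trans h
    have h1 : ∀ s ∈ T.dom, ((ρ s).1 = ⊤ ↔ ∃ t ∈ T.dom, s <+: t ∧ Y (ℓ t)) := by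
      refine T.bottomUp fun s hs ih => ?_
      have e : (ρ s).1 = ⊤ ↔ Y (ℓ s) ∨ ∃ i, s ++ [i] ∈ T.dom ∧ (ρ (s ++ [i])).1 = ⊤ := by
        rw [hρ s hs]
        simp only [hite, Prod.fst_sum, WithTop.sum_eq_top, mem_ch]
      rw [e]
      constructor
      · rintro (h | ⟨i, hi, h⟩)
        · exact ⟨s, hs, List.prefix_rfl, h⟩
        · obtain ⟨t, ht, hst, hY⟩ := (ih i hi).1 h
          exact ⟨t, ht, (hpre s t ht).2 (Or.inr ⟨i, hi, hst⟩), hY⟩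
      · rintro ⟨t, ht, hst, hY⟩
        rcases (hpre s t ht).1 hst with rfl | ⟨i, hi, h⟩
        · exact Or.inl hY
        · exact Or.inr ⟨i, hi, (ih i hi).2 ⟨t, ht, h, hY⟩⟩
    have h2 : ∀ s ∈ T.dom, ((ρ s).2 = ⊤ ↔
        ∃ u ∈ T.dom, s <+: u ∧ ∃ t ∈ T.dom, u <+: t ∧ X (ℓ u) ∧ Y (ℓ t)) := by
      refine T.bottomUp fun s hs ih => ?_
      have e : (ρ s).2 = ⊤ ↔ (X (ℓ s) ∧ (ρ s).1 = ⊤) ∨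
          ∃ i, s ++ [i] ∈ T.dom ∧ (ρ (s ++ [i])).2 = ⊤ := by
        rw [hρ s hs]
        simp only [hite, Prod.fst_sum, Prod.snd_sum, WithTop.sum_eq_top, mem_ch]
      rw [e, h1 s hs]
      constructor
      · rintro (⟨hX, t, ht, hst, hY⟩ | ⟨i, hi, h⟩)
        · exact ⟨s, hs, List.prefix_rfl, t, ht, hst, hX, hY⟩
        · obtain ⟨u, hu, hsu, h⟩ := (ih i hi).1 h
          exact ⟨u, hu, (hpre s u hu).2 (Or.inr ⟨i, hi, hsu⟩), h⟩
      · rintro ⟨u, hu, hsu, t, ht, hut, hX, hY⟩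
        rcases (hpre s u hu).1 hsu with rfl | ⟨i, hi, h⟩
        · exact Or.inl ⟨hX, t, ht, hut, hY⟩
        · exact Or.inr ⟨i, hi, (ih i hi).2 ⟨u, hu, h, t, ht, hut, hX, hY⟩⟩
    change _ ↔ (ρ []).2 = ⊤
    rw [h2 [] T.nil_mem]
    simp

lemma rec_some (X : B → Prop) : Rec fun (T : UTree A) ℓ => ∃ s ∈ T.dom, X (ℓ s) := by
  have h := rec_above (A := A) X X
  have e : (fun (T : UTree A) ℓ => ∃ s ∈ T.dom, ∃ t ∈ T.dom, s <+: t ∧ X (ℓ s) ∧ X (ℓ t))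
      = fun (T : UTree A) (ℓ : Node → B) => ∃ s ∈ T.dom, X (ℓ s) := by
    funext T ℓ
    refine propext ⟨?_, ?_⟩
    · rintro ⟨s, hs, -, -, -, h, -⟩; exact ⟨s, hs, h⟩
    · rintro ⟨s, hs, h⟩; exact ⟨s, hs, s, hs, List.prefix_rfl, h, h⟩
  rwa [e] at h

/-- Uniqueness of a marked node is recognizable: at least two nodes are marked iff the marked nodes
can be coloured by two colours that are both used. -/
lemma rec_unique (X : B → Prop) :
    Rec fun (T : UTree A) ℓ => ∃ s ∈ T.dom, ∀ t ∈ T.dom, X (ℓ t) ↔ t = s := by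
  have h := (rec_some (A := A) X).and
    ((rec_some (A := A) (fun b : B × Prop => X b.1 ∧ b.2)).and
      (rec_some (A := A) (fun b : B × Prop => X b.1 ∧ ¬ b.2))).proj.not
  convert h using 3 with T ℓ
  constructor
  · rintro ⟨s, hs, h⟩
    refine ⟨⟨s, hs, (h s hs).2 rfl⟩, ?_⟩
    rintro ⟨c, ⟨t, ht, hX, hc⟩, ⟨t', ht', hX', hc'⟩⟩
    have e1 := (h t ht).1 hX
    have e2 := (h t' ht').1 hX'
    subst e1 e2
    exact hc' hc
  · rintro ⟨⟨s, hs, hX⟩, h⟩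
    refine ⟨s, hs, fun t ht => ⟨fun hXt => ?_, by rintro rfl; exact hX⟩⟩
    by_contra hne
    exact h ⟨fun u => u = s, ⟨s, hs, hX, rfl⟩, t, ht, hXt, hne⟩

/-! ### From formulas to recognizable sets -/

/-- The label of `s` extended by the first-order and set variables that hold at `s`. -/
def enc (T : UTree A) (v : ℕ → Node) (V : ℕ → Set Node) (s : Node) :
    A × (ℕ → Prop) × (ℕ → Prop) :=
  (T.label s, fun i => v i = s, fun i => s ∈ V i)

lemma enc_updateFO (T : UTree A) (v : ℕ → Node) (V : ℕ → Set Node) (n : ℕ) (s₀ s : Node) :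
    enc T (Function.update v n s₀) V s =
      ((enc T v V s).1, Function.update (enc T v V s).2.1 n (s = s₀), (enc T v V s).2.2) := by
  refine Prod.ext rfl (Prod.ext (funext fun i => ?_) rfl)
  by_cases h : i = n
  · subst h; simp [enc, eq_comm]
  · simp [enc, h]

lemma enc_updateSO (T : UTree A) (v : ℕ → Node) (V : ℕ → Set Node) (n : ℕ) (S : Set Node)
    (s : Node) :
    enc T v (Function.update V n S) s =
      ((enc T v V s).1, (enc T v V s).2.1, Function.update (enc T v V s).2.2 n (s ∈ S)) := by
  refine Prod.ext rfl (Prod.ext rfl (funext fun i => ?_))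
  by_cases h : i = n
  · subst h; simp [enc]
  · simp [enc, h]

/-- Every formula is recognizable over the encoding of its valuations, as long as the first-order
variables denote nodes of the tree. -/
lemma rec_of_mso (φ : MSOu A) : ∃ R : UTree A → (Node → A × (ℕ → Prop) × (ℕ → Prop)) → Prop,
    Rec R ∧ ∀ T v V, (∀ i, v i ∈ T.dom) → (φ.Sat T v V ↔ R T (enc T v V)) := by
  induction φ with
  | eq x y =>
    refine ⟨_, rec_some (fun b => b.2.1 x ∧ b.2.1 y), fun T v V hv => ?_⟩
    constructor
    · intro h
      exact ⟨v x, hv x, rfl, h.symm⟩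
    · rintro ⟨s, -, h1, h2⟩
      exact h1.trans h2.symm
  | desc x y =>
    refine ⟨_, rec_above (fun b => b.2.1 x) (fun b => b.2.1 y), fun T v V hv => ?_⟩
    constructor
    · intro h
      exact ⟨v x, hv x, v y, hv y, h.2.2, rfl, rfl⟩
    · rintro ⟨s, -, t, -, h, h1, h2⟩
      refine ⟨hv x, hv y, ?_⟩
      have h1' : v x = s := h1
      have h2' : v y = t := h2
      rwa [h1', h2']
  | lab a x =>
    refine ⟨_, rec_some (fun b => b.1 = a ∧ b.2.1 x), fun T v V hv => ?_⟩
    constructor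
    · intro h
      exact ⟨v x, hv x, h.2, rfl⟩
    · rintro ⟨s, -, h1, h2⟩
      have h2' : v x = s := h2
      exact ⟨hv x, by rw [h2']; exact h1⟩
  | mem X x =>
    refine ⟨_, rec_some (fun b => b.2.2 X ∧ b.2.1 x), fun T v V hv => ?_⟩
    constructor
    · intro h
      exact ⟨v x, hv x, h, rfl⟩
    · rintro ⟨s, -, h1, h2⟩
      have h2' : v x = s := h2
      change v x ∈ V X
      rw [h2']; exact h1
  | not φ ih =>
    obtain ⟨R, hR, h⟩ := ih
    exact ⟨_, hR.not, fun T v V hv => not_congr (h T v V hv)⟩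
  | and φ ψ ih ih' =>
    obtain ⟨R, hR, h⟩ := ih
    obtain ⟨R', hR', h'⟩ := ih'
    exact ⟨_, hR.and hR', fun T v V hv => and_congr (h T v V hv) (h' T v V hv)⟩
  | exFO n φ ih =>
    obtain ⟨R, hR, h⟩ := ih
    refine ⟨_, ((rec_unique fun b : (A × (ℕ → Prop) × (ℕ → Prop)) × Prop => b.2).and
      (hR.comap fun b => (b.1.1, Function.update b.1.2.1 n b.2, b.1.2.2))).proj,
      fun T v V hv => ?_⟩
    have hup : ∀ s ∈ T.dom, ∀ i, Function.update v n s i ∈ T.dom := fun s hs i => by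
      by_cases hi : i = n
      · subst hi; simpa using hs
      · simpa [hi] using hv i
    constructor
    · rintro ⟨s₀, hs₀, hsat⟩
      refine ⟨fun s => s = s₀, ⟨s₀, hs₀, fun _ _ => Iff.rfl⟩, ?_⟩
      rw [h _ _ _ (hup s₀ hs₀)] at hsat
      exact (hR.congr fun s _ => enc_updateFO T v V n s₀ s).1 hsat
    · rintro ⟨c, ⟨s₀, hs₀, hc⟩, hr⟩
      refine ⟨s₀, hs₀, (h _ _ _ (hup s₀ hs₀)).2 ((hR.congr fun s hs => ?_).1 hr)⟩
      rw [enc_updateFO]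
      have e : c s = (s = s₀) := propext (hc s hs)
      simp only [e]
  | exSO n φ ih =>
    obtain ⟨R, hR, h⟩ := ih
    refine ⟨_, (hR.comap fun b : (A × (ℕ → Prop) × (ℕ → Prop)) × Prop =>
      (b.1.1, b.1.2.1, Function.update b.1.2.2 n b.2)).proj, fun T v V hv => ?_⟩
    constructor
    · rintro ⟨S, -, hsat⟩
      refine ⟨fun s => s ∈ S, ?_⟩
      rw [h _ _ _ hv] at hsat
      exact (hR.congr fun s _ => enc_updateSO T v V n S s).1 hsat
    · rintro ⟨c, hr⟩
      refine ⟨{s | s ∈ T.dom ∧ c s}, fun s hs => hs.1,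
        (h _ _ _ hv).2 ((hR.congr fun s hs => ?_).1 hr)⟩
      rw [enc_updateSO]
      simp [hs]

/-- For a formula with at most one relevant free variable, the trees with exactly one marked node
at which the formula holds are recognizable. All first-order variables are put on the marked
node. -/
lemma rec_marked (φ : MSOu A) : ∃ R : UTree A → (Node → A × Prop) → Prop,
    Rec R ∧ ∀ T (c : Node → Prop), (R T (fun s => (T.label s, c s)) ↔
      ∃ s₀ ∈ T.dom, (∀ t ∈ T.dom, c t ↔ t = s₀) ∧ φ.Sat T (fun _ => s₀) (fun _ => ∅)) := by
  obtain ⟨R, hR, h⟩ := rec_of_mso φ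
  refine ⟨_, (rec_unique fun b : A × Prop => b.2).and
    (hR.comap fun b : A × Prop => (b.1, fun _ => b.2, fun _ => False)), fun T c => ?_⟩
  have key : ∀ s₀, (∀ t ∈ T.dom, c t ↔ t = s₀) →
      (R T (enc T (fun _ => s₀) (fun _ => ∅)) ↔
        R T (fun s => (T.label s, fun _ => c s, fun _ => False))) := by
    intro s₀ hc
    refine hR.congr fun s hs => ?_
    simp only [enc, propext (hc s hs), Set.mem_empty_iff_false, eq_comm]
  constructor
  · rintro ⟨⟨s₀, hs₀, hc⟩, hr⟩
    exact ⟨s₀, hs₀, hc, (h _ _ _ fun _ => hs₀).2 ((key s₀ hc).2 hr)⟩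
  · rintro ⟨s₀, hs₀, hc, hsat⟩
    exact ⟨⟨s₀, hs₀, hc⟩, (key s₀ hc).1 ((h _ _ _ fun _ => hs₀).1 hsat)⟩

/-! ### From recognizable sets to counting automata -/

/-- A predicate depending on finitely many variables is expressed by a Boolean formula. -/
lemma exists_bform {V : Type} (U : Finset V) : ∀ G : (V → Prop) → Prop,
    (∀ f g, (∀ u ∈ U, f u ↔ g u) → (G f ↔ G g)) → ∃ β : BForm V, ∀ f, β.Eval f ↔ G f := by
  classical
  induction U using Finset.induction_on with
  | empty =>
    intro G hG
    by_cases h : G fun _ => True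
    · exact ⟨.tru, fun f => iff_of_true trivial ((hG _ _ (by simp)).1 h)⟩
    · exact ⟨.not .tru, fun f => iff_of_false (fun hn => hn trivial)
        fun hf => h ((hG _ _ (by simp)).1 hf)⟩
  | insert u U _ ih =>
    intro G hG
    have hdep : ∀ p : Prop, ∀ f g : V → Prop, (∀ w ∈ U, f w ↔ g w) →
        (G (Function.update f u p) ↔ G (Function.update g u p)) := by
      intro p f g hfg
      refine hG _ _ fun w hw => ?_
      by_cases hwu : w = u
      · subst hwu; simp
      · simpa [hwu] using hfg w ((Finset.mem_insert.1 hw).resolve_left hwu)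
    obtain ⟨β₁, h₁⟩ := ih _ (hdep True)
    obtain ⟨β₀, h₀⟩ := ih _ (hdep False)
    refine ⟨.not (.and (.not (.and (.var u) β₁)) (.not (.and (.not (.var u)) β₀))), fun f => ?_⟩
    simp only [BForm.Eval, h₁, h₀]
    by_cases hu : f u
    · have : Function.update f u True = f := by
        rw [Function.update_eq_self_iff]; simp [hu]
      simp [hu, this]
    · have : Function.update f u False = f := by
        rw [Function.update_eq_self_iff]; simp [hu]
      simp [hu, this]

/-- A predicate on multiplicities which only sees them up to the threshold `K` is a Boolean
function of the variables `v_q^k`. -/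
lemma exists_bform_count {Q : Type} [Finite Q] (K : ℕ) (P : (Q → ℕ) → Prop)
    (hP : ∀ n, P n ↔ P (fun q => min (n q) K)) :
    ∃ β : BForm (Q × ℕ), ∀ n : Q → ℕ, β.Eval (fun qk => qk.2 + 1 ≤ n qk.1) ↔ P n := by
  classical
  have := Fintype.ofFinite Q
  obtain ⟨β, hβ⟩ := exists_bform (Finset.univ ×ˢ Finset.range K : Finset (Q × ℕ))
    (fun f => P fun q => ((Finset.range K).filter fun k => f (q, k)).card) (by
      intro f g hfg
      have : ∀ q, ((Finset.range K).filter fun k => f (q, k))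
          = ((Finset.range K).filter fun k => g (q, k)) := fun q =>
        Finset.filter_congr fun k hk => hfg (q, k) (by simpa using hk)
      simp only [this])
  refine ⟨β, fun n => ?_⟩
  rw [hβ, hP n]
  have : ∀ q, ((Finset.range K).filter fun k => k + 1 ≤ n q) = Finset.range (min (n q) K) := by
    intro q; ext k; simp; omega
  simp only [this, Finset.card_range]

lemma ncard_children {Q : Type} (T : UTree A) (ρ : Node → Q) (s : Node) (q : Q)
    [DecidableEq Q] :
    Set.ncard {i : ℕ | s ++ [i] ∈ T.dom ∧ ρ (s ++ [i]) = q}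
      = ((ch T s).filter fun i => ρ (s ++ [i]) = q).card := by
  rw [← Set.ncard_coe_finset]
  congr 1
  ext i
  simp

/-- The automaton guesses the marking and the values of the evaluation; aperiodicity makes the
transition condition a threshold condition. Its accepting runs are exactly the markings with the
recognizable property, a node being marked iff its state is in `P`. -/
lemma exists_automaton {R : UTree A → (Node → A × Prop) → Prop} (hR : Rec R) :
    ∃ (N : CNUTA A) (P : Set N.Q), ∀ T,
      (∀ ρ, N.IsRun T ρ → ρ [] ∈ N.F → R T (fun s => (T.label s, ρ s ∈ P))) ∧
      (∀ c : Node → Prop, R T (fun s => (T.label s, c s)) →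
        ∃ ρ, N.IsRun T ρ ∧ ρ [] ∈ N.F ∧ ∀ s, ρ s ∈ P ↔ c s) := by
  classical
  obtain ⟨M, _, _, K, hK, step, F, H⟩ := hR
  have := Fintype.ofFinite M
  have hδ : ∀ (q : M × Prop) (a : A), ∃ β : BForm ((M × Prop) × ℕ), ∀ n : M × Prop → ℕ,
      β.Eval (fun qk => qk.2 + 1 ≤ n qk.1) ↔ q.1 = step (a, q.2) (∑ p, n p • p.1) := by
    intro q a
    refine exists_bform_count K _ fun n => ?_
    have : ∀ p : M × Prop, min (n p) K • p.1 = n p • p.1 := by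
      intro p
      rcases le_total (n p) K with h | h
      · rw [min_eq_left h]
      · rw [min_eq_right h, nsmul_stable hK _ h]
    simp only [this]
  choose δ hδ using hδ
  let N : CNUTA A := ⟨M × Prop, inferInstance, {q | q.1 ∈ F}, δ⟩
  have hrun : ∀ (T : UTree A) (ρ : Node → M × Prop), N.IsRun T ρ ↔
      IsEval T step (fun s => (T.label s, (ρ s).2)) (fun s => (ρ s).1) := by
    intro T ρ
    refine forall₂_congr fun s hs => ?_
    refine (hδ (ρ s) (T.label s)
      (fun q => Set.ncard {i : ℕ | s ++ [i] ∈ T.dom ∧ ρ (s ++ [i]) = q})).trans ?_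
    simp only [ncard_children]
    have e : ∑ p : M × Prop, ((ch T s).filter fun i => ρ (s ++ [i]) = p).card • p.1
        = ∑ i ∈ ch T s, (ρ (s ++ [i])).1 := by
      rw [← Finset.sum_fiberwise (ch T s) (fun i => ρ (s ++ [i]))]
      refine Finset.sum_congr rfl fun p _ => ?_
      rw [← Finset.sum_const]
      exact Finset.sum_congr rfl fun i hi => by rw [(Finset.mem_filter.1 hi).2]
    rw [e]
  refine ⟨N, {q | q.2}, fun T => ⟨fun ρ hρ hF => ?_, fun c hc => ?_⟩⟩
  · exact (H T _ _ ((hrun T ρ).1 hρ)).2 hF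
  · obtain ⟨σ, hσ⟩ := exists_isEval T step (fun s => (T.label s, c s))
    exact ⟨fun s => (σ s, c s), (hrun T _).2 hσ, (H T _ _ hσ).1 hc, fun s => Iff.rfl⟩

/-- The accepting runs of the automaton correspond to the nodes satisfying the formula. -/
lemma automaton_of_mso (φ : MSOu A) : ∃ (N : CNUTA A) (P : Set N.Q), ∀ T : UTree A,
    (∀ ρ, N.IsRun T ρ → ρ [] ∈ N.F →
      ∃ s₀ ∈ T.dom, (∀ t ∈ T.dom, ρ t ∈ P ↔ t = s₀) ∧ φ.Sat T (fun _ => s₀) (fun _ => ∅)) ∧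
    (∀ s₀ ∈ T.dom, φ.Sat T (fun _ => s₀) (fun _ => ∅) →
      ∃ ρ, N.IsRun T ρ ∧ ρ [] ∈ N.F ∧ ∀ s, ρ s ∈ P ↔ s = s₀) := by
  obtain ⟨R, hR, h⟩ := rec_marked φ
  obtain ⟨N, P, hN⟩ := exists_automaton hR
  refine ⟨N, P, fun T => ⟨fun ρ hρ hF => ?_, fun s₀ hs₀ hsat => ?_⟩⟩
  · exact (h T fun s => ρ s ∈ P).1 ((hN T).1 ρ hρ hF)
  · exact (hN T).2 (fun s => s = s₀) ((h T _).2 ⟨s₀, hs₀, fun _ _ => Iff.rfl, hsat⟩)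

/-! ### From counting automata to formulas -/

/-- A property of trees with valuations is definable if some MSO formula defines it. Working with
this predicate keeps the construction of formulas semantic. -/
def Definable (R : UTree A → (ℕ → Node) → (ℕ → Set Node) → Prop) : Prop :=
  ∃ φ : MSOu A, ∀ T v V, φ.Sat T v V ↔ R T v V

section Definability

variable {R S : UTree A → (ℕ → Node) → (ℕ → Set Node) → Prop}

lemma Definable.of_iff (h : Definable R) (e : ∀ T v V, R T v V ↔ S T v V) : Definable S := by
  obtain ⟨φ, hφ⟩ := h
  exact ⟨φ, fun T v V => (hφ T v V).trans (e T v V)⟩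

lemma Definable.not (h : Definable R) : Definable fun T v V => ¬ R T v V := by
  obtain ⟨φ, hφ⟩ := h
  exact ⟨.not φ, fun T v V => not_congr (hφ T v V)⟩

lemma Definable.and (h : Definable R) (h' : Definable S) :
    Definable fun T v V => R T v V ∧ S T v V := by
  obtain ⟨φ, hφ⟩ := h
  obtain ⟨ψ, hψ⟩ := h'
  exact ⟨.and φ ψ, fun T v V => and_congr (hφ T v V) (hψ T v V)⟩

lemma Definable.imp (h : Definable R) (h' : Definable S) :
    Definable fun T v V => R T v V → S T v V :=
  (h.and h'.not).not.of_iff fun T v V => by simp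

lemma Definable.exFO (n : ℕ) (h : Definable R) :
    Definable fun T v V => ∃ s ∈ T.dom, R T (Function.update v n s) V := by
  obtain ⟨φ, hφ⟩ := h
  refine ⟨.exFO n φ, fun T v V => ?_⟩
  simp only [MSOu.Sat, hφ]

lemma Definable.allFO (n : ℕ) (h : Definable R) :
    Definable fun T v V => ∀ s ∈ T.dom, R T (Function.update v n s) V :=
  (h.not.exFO n).not.of_iff fun T v V => by simp

lemma Definable.exSO (n : ℕ) (h : Definable R) :
    Definable fun T v V => ∃ W : Set Node, W ⊆ ↑T.dom ∧ R T v (Function.update V n W) := by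
  obtain ⟨φ, hφ⟩ := h
  refine ⟨.exSO n φ, fun T v V => ?_⟩
  simp only [MSOu.Sat, hφ]

lemma definable_true : Definable fun (_ : UTree A) _ _ => True :=
  ⟨.not (.and (.eq 0 0) (.not (.eq 0 0))), fun T v V => by simp [MSOu.Sat]⟩

lemma definable_const (p : Prop) : Definable fun (_ : UTree A) _ _ => p := by
  by_cases h : p
  · exact definable_true.of_iff fun T v V => by simp [h]
  · exact definable_true.not.of_iff fun T v V => by simp [h]

lemma Definable.all {ι : Type} [Finite ι] {R : ι → UTree A → (ℕ → Node) → (ℕ → Set Node) → Prop}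
    (h : ∀ i, Definable (R i)) : Definable fun T v V => ∀ i, R i T v V := by
  classical
  have := Fintype.ofFinite ι
  have key : ∀ U : Finset ι, Definable fun T v V => ∀ i ∈ U, R i T v V := by
    intro U
    induction U using Finset.induction_on with
    | empty => exact definable_true.of_iff fun T v V => by simp
    | insert i U _ ih => exact ((h i).and ih).of_iff fun T v V => by simp
  exact (key Finset.univ).of_iff fun T v V => by simp

lemma Definable.ex {ι : Type} [Finite ι] {R : ι → UTree A → (ℕ → Node) → (ℕ → Set Node) → Prop}
    (h : ∀ i, Definable (R i)) : Definable fun T v V => ∃ i, R i T v V :=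
  (Definable.all fun i => (h i).not).not.of_iff fun T v V => by simp

end Definability

lemma definable_eq (x y : ℕ) : Definable fun (_ : UTree A) v _ => v x = v y :=
  ⟨.eq x y, fun _ _ _ => Iff.rfl⟩

lemma definable_desc (x y : ℕ) : Definable fun (T : UTree A) v _ => T.descR (v x) (v y) :=
  ⟨.desc x y, fun _ _ _ => Iff.rfl⟩

lemma definable_lab (a : A) (x : ℕ) : Definable fun T v _ => v x ∈ T.dom ∧ T.label (v x) = a :=
  ⟨.lab a x, fun _ _ _ => Iff.rfl⟩

lemma definable_mem (X x : ℕ) : Definable fun (_ : UTree A) v V => v x ∈ V X :=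
  ⟨.mem X x, fun _ _ _ => Iff.rfl⟩

/-- The child relation is the covering relation of the descendant order. -/
lemma childR_iff (T : UTree A) (s t : Node) : T.childR s t ↔
    T.descR s t ∧ s ≠ t ∧ ∀ u ∈ T.dom, T.descR s u ∧ T.descR u t → u = s ∨ u = t := by
  constructor
  · rintro ⟨hs, ht, i, rfl⟩
    refine ⟨⟨hs, ht, List.prefix_append _ _⟩, by simp, ?_⟩
    rintro u - ⟨⟨-, -, h1⟩, ⟨-, -, h2⟩⟩
    rcases List.prefix_concat_iff.1 h2 with h | h
    · exact Or.inr h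
    · exact Or.inl (h.eq_of_length_le h1.length_le)
  · rintro ⟨⟨hs, ht, w, rfl⟩, hne, h⟩
    refine ⟨hs, ht, ?_⟩
    cases w with
    | nil => simp at hne
    | cons i w =>
      have hp : s ++ [i] <+: s ++ i :: w := ⟨w, by simp⟩
      have hi := T.prefix_closed ht hp
      rcases h (s ++ [i]) hi ⟨⟨hs, hi, List.prefix_append _ _⟩, hi, ht, hp⟩ with h | h
      · simp at h
      · exact ⟨i, h.symm⟩

lemma definable_child (x y : ℕ) : Definable fun (T : UTree A) v _ => T.childR (v x) (v y) := by
  -- `x + y + 1` is a variable distinct from `x` and `y`.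
  refine ((definable_desc x y).and ((definable_eq x y).not.and
    ((((definable_desc x (x + y + 1)).and (definable_desc (x + y + 1) y)).imp
      (((definable_eq (x + y + 1) x).not.and (definable_eq (x + y + 1) y).not).not)).allFO
        (x + y + 1)))).of_iff fun T v V => ?_
  rw [childR_iff]
  have hx : x ≠ x + y + 1 := by omega
  have hy : y ≠ x + y + 1 := by omega
  simp only [Function.update_self, Function.update_of_ne hx, Function.update_of_ne hy,
    not_and_or, not_not]

/-- The children of `s` lying in `W`. -/
def childrenIn (T : UTree A) (s : Node) (W : Set Node) : Set Node := {t | T.childR s t ∧ t ∈ W}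

lemma childrenIn_finite (T : UTree A) (s : Node) (W : Set Node) : (childrenIn T s W).Finite :=
  T.dom.finite_toSet.subset fun _ h => h.1.2.1

lemma succ_le_ncard_iff {α : Type} {S : Set α} (hS : S.Finite) (k : ℕ) :
    k + 1 ≤ S.ncard ↔ ∃ y ∈ S, k ≤ (S \ {y}).ncard := by
  constructor
  · intro h
    obtain ⟨y, hy⟩ := (Set.ncard_pos hS).1 (by omega)
    refine ⟨y, hy, ?_⟩
    rw [Set.ncard_sdiff_singleton_of_mem hy]
    omega
  · rintro ⟨y, hy, h⟩
    rw [← Set.ncard_sdiff_singleton_add_one hy hS]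
    omega

/-- Having at least `k` children of `x₁` in `X` besides `x₂, …, x_{n-1}` is
definable, by induction on `k`. -/
lemma definable_atLeast_aux (X k : ℕ) : ∀ n, 2 ≤ n → Definable fun (T : UTree A) v V =>
    k ≤ (childrenIn T (v 1) (V X) \ {y | ∃ j : Fin n, 2 ≤ (j : ℕ) ∧ v j = y}).ncard := by
  induction k with
  | zero => exact fun n _ => definable_true.of_iff fun T v V => by simp
  | succ k ih =>
    intro n hn
    refine (((definable_child 1 n).and ((definable_mem X n).and
      ((Definable.all fun j : Fin n =>
        (definable_const (2 ≤ (j : ℕ))).imp (definable_eq j n).not).and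
        (ih (n + 1) (by omega))))).exFO n).of_iff fun T v V => ?_
    rw [succ_le_ncard_iff ((childrenIn_finite T _ _).subset Set.sdiff_subset)]
    have h1 : (1 : ℕ) ≠ n := by omega
    have hj : ∀ j : Fin n, (j : ℕ) ≠ n := fun j => j.2.ne
    have hset : ∀ s : Node, {y | ∃ j : Fin (n + 1), 2 ≤ (j : ℕ) ∧ Function.update v n s j = y}
        = {y | ∃ j : Fin n, 2 ≤ (j : ℕ) ∧ v j = y} ∪ {s} := by
      intro s
      ext y
      simp only [Set.mem_ofPred_eq, Set.mem_union, Set.mem_singleton_iff, Fin.exists_fin_succ',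
        Fin.val_castSucc, Fin.val_last, Function.update_self, Function.update_of_ne (hj _)]
      constructor
      · rintro (h | ⟨-, h⟩)
        exacts [Or.inl h, Or.inr h.symm]
      · rintro (h | h)
        exacts [Or.inl h, Or.inr ⟨hn, h.symm⟩]
    simp only [Function.update_self, Function.update_of_ne h1, Function.update_of_ne (hj _), hset,
      ← Set.sdiff_sdiff]
    constructor
    · rintro ⟨s, -, hc, hX, hne, h⟩
      refine ⟨s, ⟨⟨hc, hX⟩, ?_⟩, h⟩
      rintro ⟨j, hj2, hjs⟩
      exact hne j hj2 hjs
    · rintro ⟨s, ⟨⟨hc, hX⟩, hne⟩, h⟩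
      exact ⟨s, hc.2.1, hc, hX, fun j hj2 hjs => hne ⟨j, hj2, hjs⟩, h⟩

lemma definable_atLeast (X k : ℕ) :
    Definable fun (T : UTree A) v V => k ≤ (childrenIn T (v 1) (V X)).ncard := by
  refine (definable_atLeast_aux X k 2 le_rfl).of_iff fun T v V => ?_
  have : {y | ∃ j : Fin 2, 2 ≤ (j : ℕ) ∧ v j = y} = ∅ := by
    ext y
    simp only [Set.mem_ofPred_eq, Set.mem_empty_iff_false, iff_false]
    rintro ⟨j, hj, -⟩
    omega
  rw [this, Set.sdiff_empty]

lemma definable_bform {Q : Type} (e : Q → ℕ) (β : BForm (Q × ℕ)) :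
    Definable fun (T : UTree A) v V =>
      β.Eval fun qk => qk.2 + 1 ≤ (childrenIn T (v 1) (V (e qk.1))).ncard := by
  induction β with
  | tru => exact definable_true
  | var qk => exact definable_atLeast _ _
  | not β ih => exact ih.not
  | and β γ ihβ ihγ => exact ihβ.and ihγ

/-- Quantification over the first `n` set variables at once. -/
lemma Definable.exSOs {R : UTree A → (ℕ → Node) → (ℕ → Set Node) → Prop} (h : Definable R) (n : ℕ) :
    Definable fun T v V => ∃ W : ℕ → Set Node,
      (∀ i < n, W i ⊆ ↑T.dom) ∧ (∀ i, n ≤ i → W i = V i) ∧ R T v W := by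
  induction n with
  | zero =>
    refine h.of_iff fun T v V => ⟨fun hr => ⟨V, by simp, fun _ _ => rfl, hr⟩, ?_⟩
    rintro ⟨W, -, hW, hr⟩
    rwa [show W = V from funext fun i => hW i (Nat.zero_le i)] at hr
  | succ n ih =>
    refine (ih.exSO n).of_iff fun T v V => ?_
    constructor
    · rintro ⟨S, hS, W, h1, h2, hr⟩
      refine ⟨W, fun i hi => ?_, fun i hi => ?_, hr⟩
      · rcases Nat.lt_succ_iff_lt_or_eq.1 hi with hi | rfl
        · exact h1 i hi
        · rw [h2 i le_rfl, Function.update_self]; exact hS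
      · rw [h2 i (by omega), Function.update_of_ne (by omega)]
    · rintro ⟨W, h1, h2, hr⟩
      refine ⟨W n, h1 n (by omega), W, fun i hi => h1 i (by omega), fun i hi => ?_, hr⟩
      by_cases hin : i = n
      · subst hin; simp
      · rw [Function.update_of_ne hin]; exact h2 i (by omega)

/-- The existence of an accepting run whose state at `x₀` and label of `x₀` form a pair in `S` is
definable: the set variables `X_{e q}` hold the nodes in state `q`. -/
lemma mso_of_automaton [Finite A] (N : CNUTA A) (S : Set (N.Q × A)) :
    ∃ φ : MSOu A, ∀ T v V, v 0 ∈ T.dom → (φ.Sat T v V ↔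
      ∃ ρ, N.IsRun T ρ ∧ ρ [] ∈ N.F ∧ (ρ (v 0), T.label (v 0)) ∈ S) := by
  classical
  have := N.fintype_Q
  let e : N.Q → ℕ := fun q => Fintype.equivFin N.Q q
  have he : Function.Injective e := fun q q' h => by
    simpa [e, Fin.val_inj] using h
  have hen : ∀ q, e q < Fintype.card N.Q := fun q => (Fintype.equivFin N.Q q).2
  -- The sets `V (e q)` partition the domain.
  have hpart := (Definable.ex fun q => definable_mem (A := A) (e q) 1).allFO 1
  have hdisj := (Definable.all fun q : N.Q => Definable.all fun q' : N.Q =>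
    (definable_mem (A := A) (e q) 1).imp
      ((definable_mem (e q') 1).imp (definable_const (q = q')))).allFO 1
  have hrun := (Definable.all fun q : N.Q => Definable.all fun a : A =>
    (definable_mem (e q) 1).imp ((definable_lab a 1).imp (definable_bform e (N.δ q a)))).allFO 1
  -- The node `x₁` is the root iff every node is a descendant of it.
  have hroot := ((((definable_desc (A := A) 1 2).allFO 2).and
    (Definable.ex fun q : N.Q => (definable_mem (e q) 1).and (definable_const (q ∈ N.F))))).exFO 1
  have hsel := Definable.ex fun p : N.Q × A => (definable_const (p ∈ S)).and
    ((definable_mem (e p.1) 0).and (definable_lab p.2 0))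
  obtain ⟨φ, hφ⟩ := (hpart.and (hdisj.and (hrun.and (hroot.and hsel)))).exSOs (Fintype.card N.Q)
  refine ⟨φ, fun T v V hv => (hφ T v V).trans ?_⟩
  have h12 : (1 : ℕ) ≠ 2 := by decide
  simp only [Function.update_self, Function.update_of_ne h12]
  -- The state-counting sets of a run and of the set variables have the same size.
  have hcount : ∀ (W : ℕ → Set Node) (ρ : Node → N.Q),
      (∀ s ∈ T.dom, ∀ q, s ∈ W (e q) ↔ ρ s = q) → ∀ s ∈ T.dom, ∀ q,
      (childrenIn T s (W (e q))).ncard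
        = Set.ncard {i : ℕ | s ++ [i] ∈ T.dom ∧ ρ (s ++ [i]) = q} := by
    intro W ρ hW s hs q
    rw [← Set.ncard_image_of_injective (f := fun i : ℕ => s ++ [i]) _
      (fun i j h => by simpa using h)]
    congr 1
    ext t
    simp only [childrenIn, UTree.childR, Set.mem_ofPred_eq, Set.mem_image]
    constructor
    · rintro ⟨⟨-, ht, i, rfl⟩, h⟩
      exact ⟨i, ⟨ht, (hW _ ht q).1 h⟩, rfl⟩
    · rintro ⟨i, ⟨ht, h⟩, rfl⟩
      exact ⟨⟨hs, ht, i, rfl⟩, (hW _ ht q).2 h⟩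
  constructor
  · rintro ⟨W, -, -, hp, hd, hr, ⟨r, hrd, hr0, q₀, hq₀, hqF⟩, ⟨p, hpS, hp1, -, hp2⟩⟩
    have hr' : r = [] := List.prefix_nil.1 (hr0 [] T.nil_mem).2.2
    subst hr'
    let ρ : Node → N.Q := fun s => if h : ∃ q, s ∈ W (e q) then h.choose else q₀
    have hρ : ∀ s ∈ T.dom, ∀ q, s ∈ W (e q) ↔ ρ s = q := by
      intro s hs q
      have hex := hp s hs
      have hm : s ∈ W (e (ρ s)) := by
        simp only [ρ, dif_pos hex]
        exact hex.choose_spec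
      exact ⟨fun h => hd s hs _ _ hm h, fun h => h ▸ hm⟩
    refine ⟨ρ, fun s hs => ?_, ?_, ?_⟩
    · have := hr s hs (ρ s) (T.label s) ((hρ s hs _).2 rfl) ⟨hs, rfl⟩
      simpa only [hcount W ρ hρ s hs] using this
    · rwa [(hρ [] T.nil_mem q₀).1 hq₀]
    · rw [(hρ _ hv _).1 hp1, hp2]
      exact hpS
  · rintro ⟨ρ, hrunρ, hF, hS⟩
    let W : ℕ → Set Node := fun i =>
      if i < Fintype.card N.Q then {s | s ∈ T.dom ∧ e (ρ s) = i} else V i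
    have hW : ∀ s ∈ T.dom, ∀ q, s ∈ W (e q) ↔ ρ s = q := by
      intro s hs q
      simp only [W, if_pos (hen q), Set.mem_ofPred_eq, hs, true_and, he.eq_iff]
    refine ⟨W, fun i hi => ?_, fun i hi => if_neg (by omega), ?_, ?_, ?_, ?_, ?_⟩
    · simp only [W, if_pos hi]
      exact fun s hs => hs.1
    · exact fun s hs => ⟨ρ s, (hW s hs _).2 rfl⟩
    · intro s hs q q' h h'
      exact ((hW s hs q).1 h).symm.trans ((hW s hs q').1 h')
    · rintro s hs q a h ⟨-, rfl⟩
      have hq := (hW s hs q).1 h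
      subst hq
      simp only [hcount W ρ hW s hs]
      exact hrunρ s hs
    · exact ⟨[], T.nil_mem, fun t ht => ⟨T.nil_mem, ht, List.nil_prefix⟩, ρ [],
        (hW [] T.nil_mem _).2 rfl, hF⟩
    · exact ⟨(ρ (v 0), T.label (v 0)), hS, (hW _ hv _).2 rfl, hv, rfl⟩

end Proof

/-- (a) A set of unordered unranked Σ-trees is MSO-definable
iff it is `L_u(A_c)` for some counting nondeterministic unranked tree
automaton. (b) A unary query over unordered unranked Σ-trees is MSO-definable
iff it is definable by a counting query automaton under the existential
semantics, iff it is definable by one under the universal semantics. -/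
theorem counting_automata_mso (A : Type) [Fintype A] :
    (∀ L : Set (UTree A),
      (∃ φ : MSOu A, φ.DefinesB L) ↔
        ∃ N : CNUTA A, ∀ T : UTree A, N.Accepts T ↔ T ∈ L) ∧
    (∀ Q : UTree A → Set Node, (∀ T, Q T ⊆ ↑T.dom) →
      (((∃ φ : MSOu A, φ.DefinesU Q) ↔
          ∃ QA : CQA A, ∀ T, Q T = QA.existsSem T) ∧
       ((∃ φ : MSOu A, φ.DefinesU Q) ↔
          ∃ QA : CQA A, ∀ T, Q T = QA.forallSem T))) := by
  constructor
  · intro L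
    constructor
    · rintro ⟨φ, hφ⟩
      obtain ⟨N, P, hN⟩ := automaton_of_mso φ
      refine ⟨N, fun T => ⟨?_, fun hT => ?_⟩⟩
      · rintro ⟨ρ, hρ, hF⟩
        obtain ⟨s₀, -, -, hsat⟩ := (hN T).1 ρ hρ hF
        exact (hφ T _ _).2 hsat
      · obtain ⟨ρ, hρ, hF, -⟩ := (hN T).2 [] T.nil_mem ((hφ T _ _).1 hT)
        exact ⟨ρ, hρ, hF⟩
    · rintro ⟨N, hN⟩
      obtain ⟨φ, hφ⟩ := mso_of_automaton N Set.univ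
      refine ⟨.exFO 0 φ, fun T v V => (hN T).symm.trans ⟨?_, ?_⟩⟩
      · rintro ⟨ρ, hρ, hF⟩
        exact ⟨[], T.nil_mem, (hφ T _ V (by simpa using T.nil_mem)).2 ⟨ρ, hρ, hF, trivial⟩⟩
      · rintro ⟨s, hs, hsat⟩
        obtain ⟨ρ, hρ, hF, -⟩ := (hφ T _ V (by simpa using hs)).1 hsat
        exact ⟨ρ, hρ, hF⟩
  · intro Q hQ
    refine ⟨⟨?_, ?_⟩, ⟨?_, ?_⟩⟩
    · rintro ⟨φ, hφ⟩
      obtain ⟨N, P, hN⟩ := automaton_of_mso φ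
      refine ⟨⟨N, {p | p.1 ∈ P}⟩, fun T => Set.ext fun s => ⟨fun hs => ?_, ?_⟩⟩
      · have hsat := (hφ T (fun _ => s) (fun _ => ∅) s (hQ T hs)).1 hs
        rw [Function.update_eq_self_iff.2 rfl] at hsat
        obtain ⟨ρ, hρ, hF, hP⟩ := (hN T).2 s (hQ T hs) hsat
        exact ⟨hQ T hs, ρ, hρ, hF, (hP s).2 rfl⟩
      · rintro ⟨hs, ρ, hρ, hF, hP⟩
        obtain ⟨s₀, -, huniq, hsat⟩ := (hN T).1 ρ hρ hF
        obtain rfl := (huniq s hs).1 hP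
        refine (hφ T (fun _ => s) (fun _ => ∅) s hs).2 ?_
        rwa [Function.update_eq_self_iff.2 rfl]
    · rintro ⟨QA, hQA⟩
      obtain ⟨φ, hφ⟩ := mso_of_automaton QA.N QA.S
      refine ⟨φ, fun T v V s hs => ?_⟩
      rw [hQA T, hφ T _ V (by simpa using hs), Function.update_self]
      exact ⟨fun h => h.2, fun h => ⟨hs, h⟩⟩
    · -- The accepting runs mark the nodes refuting `φ`, so a node is selected iff no run marks it.
      rintro ⟨φ, hφ⟩
      obtain ⟨N, P, hN⟩ := automaton_of_mso φ.not
      refine ⟨⟨N, {p | p.1 ∉ P}⟩, fun T => Set.ext fun s => ⟨fun hs => ?_, ?_⟩⟩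
      · refine ⟨hQ T hs, fun ρ hρ hF hP => ?_⟩
        obtain ⟨s₀, -, huniq, hsat⟩ := (hN T).1 ρ hρ hF
        obtain rfl := (huniq s (hQ T hs)).1 hP
        have h := (hφ T (fun _ => s) (fun _ => ∅) s (hQ T hs)).1 hs
        rw [Function.update_eq_self_iff.2 rfl] at h
        exact hsat h
      · rintro ⟨hs, hall⟩
        by_contra hns
        have hsat := mt (hφ T (fun _ => s) (fun _ => ∅) s hs).2 hns
        rw [Function.update_eq_self_iff.2 rfl] at hsat
        obtain ⟨ρ, hρ, hF, hP⟩ := (hN T).2 s hs hsat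
        exact hall ρ hρ hF ((hP s).2 rfl)
    · rintro ⟨QA, hQA⟩
      obtain ⟨φ, hφ⟩ := mso_of_automaton QA.N QA.Sᶜ
      refine ⟨.not φ, fun T v V s hs => ?_⟩
      rw [hQA T, MSOu.Sat, hφ T _ V (by simpa using hs), Function.update_self]
      constructor
      · rintro ⟨-, h⟩ ⟨ρ, hρ, hF, hn⟩
        exact hn (h ρ hρ hF)
      · intro h
        refine ⟨hs, fun ρ hρ hF => ?_⟩
        by_contra hn
        exact h ⟨ρ, hρ, hF, hn⟩

end UnrankedTrees
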